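/- arXiv:2006.06630 — 4 statements merged into one kernel-verified Lean document; each statement's English description precedes it below -/
import Mathlib

section
/- Conservative CLog-nets create no new data values: if N is a conservative CLog-net with catalog instance Cat and initial marking m0, and C is the (finite) set of constants occurring in the guards and output flows of N, then for every marking m reachable from m0, Val(m) ⊆ Val(m0) ∪ Val(Cat) ∪ C. -/
/-- A CLog-net over places `P`, transitions `T`, variables `Var`, values `V`,
data types `DT`, and catalog instances `Cat`. -/
structure CLogNet (P T Var V DT Cat : Type) where
  /-- value domain `Δ_D` of each data type -/
  dom : DT → Set V
  /-- variable typing function -/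
  vtype : Var → DT
  /-- the set of fresh ν-variables -/
  nu : Set Var
  /-- color of each place: a tuple of data types -/
  color : P → List DT
  /-- input flow: a multiset of inscriptions (tuples of ordinary variables) -/
  flowIn : P → T → Multiset (List Var)
  /-- output flow: a multiset of tuples of variables (ordinary or ν) and constants -/
  flowOut : T → P → Multiset (List (Var ⊕ V))
  /-- `Val(Cat)`: the set of constants occurring in a catalog instance -/
  catVal : Cat → Set V
  /-- a catalog instance is a finite set of facts, so `Val(Cat)` is finite -/
  catValFinite : ∀ c, (catVal c).Finite
  /-- satisfaction of the guard `Q ∧ φ` of a transition under a binding, in a catalog -/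
  guardSat : T → (Var → V) → Cat → Prop
  /-- the constants occurring in the guard of a transition -/
  guardConsts : T → Set V
  /-- the constants occurring in guards form a finite set -/
  guardConstsFinite : ∀ t, (guardConsts t).Finite
  /-- input inscriptions are typed according to the place color -/
  flowInTyped : ∀ p t, ∀ ins ∈ flowIn p t,
    List.Forall₂ (fun x D => vtype x = D) ins (color p)
  /-- input inscriptions use only ordinary variables -/
  flowInOrdinary : ∀ p t, ∀ ins ∈ flowIn p t, ∀ x ∈ ins, x ∉ nu
  /-- output inscriptions are typed according to the place color -/
  flowOutTyped : ∀ t p, ∀ ins ∈ flowOut t p,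
    List.Forall₂ (fun e D => Sum.elim (fun x => vtype x = D) (fun v => v ∈ dom D) e)
      ins (color p)

variable {P T Var V DT Cat : Type}

/-- A marking assigns to each place a finite multiset of tuples of values. -/
abbrev Marking (P V : Type) := P → Multiset (List V)

namespace CLogNet

/-- `m` is a marking of `N`: every token in place `p` is a tuple over `Δ_color(p)`. -/
def IsMarking (N : CLogNet P T Var V DT Cat) (m : Marking P V) : Prop :=
  ∀ p, ∀ tup ∈ m p, List.Forall₂ (fun v D => v ∈ N.dom D) tup (N.color p)

/-- `Val(m)`: the set of values occurring in a marking. -/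
def MVal (m : Marking P V) : Set V := {v | ∃ p, ∃ tup ∈ m p, v ∈ tup}

/-- A type-respecting binding. -/
def IsBinding (N : CLogNet P T Var V DT Cat) (σ : Var → V) : Prop :=
  ∀ x, σ x ∈ N.dom (N.vtype x)

/-- The variables occurring in the input flow of a transition. -/
def inVars (N : CLogNet P T Var V DT Cat) (t : T) : Set Var :=
  {x | ∃ p, ∃ ins ∈ N.flowIn p t, x ∈ ins}

/-- The variables occurring in the output flow of a transition. -/
def outVars (N : CLogNet P T Var V DT Cat) (t : T) : Set Var :=
  {x | ∃ p, ∃ ins ∈ N.flowOut t p, Sum.inl x ∈ ins}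

/-- The constants occurring in the output flow of a transition. -/
def outConsts (N : CLogNet P T Var V DT Cat) (t : T) : Set V :=
  {v | ∃ p, ∃ ins ∈ N.flowOut t p, Sum.inr v ∈ ins}

/-- Application of a binding to a multiset of input inscriptions. -/
def evalIn (σ : Var → V) (s : Multiset (List Var)) : Multiset (List V) :=
  s.map (List.map σ)

/-- Application of a binding to a multiset of output inscriptions. -/
def evalOut (σ : Var → V) (s : Multiset (List (Var ⊕ V))) : Multiset (List V) :=
  s.map (List.map (Sum.elim σ id))

/-- Transition `t` is enabled in marking `m` and catalog instance `c` under binding `σ`: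
(i) the bound input inscriptions are contained in the marking, (ii) the guard is
satisfied, (iii) ν-variables of the output flow are bound to values fresh w.r.t. the
marking and the catalog, (iv) output variables that are neither ν-variables nor input
variables are bound, via an answer of the guard query `Q`, to values of the catalog. -/
def Enabled (N : CLogNet P T Var V DT Cat) (c : Cat) (m : Marking P V) (t : T)
    (σ : Var → V) : Prop :=
  N.IsBinding σ ∧
  (∀ p, evalIn σ (N.flowIn p t) ≤ m p) ∧
  N.guardSat t σ c ∧
  (∀ x ∈ N.nu, x ∈ N.outVars t → σ x ∉ MVal m ∪ N.catVal c) ∧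
  (∀ x ∈ N.outVars t, x ∉ N.nu → x ∉ N.inVars t → σ x ∈ N.catVal c)

/-- The marking resulting from firing `t` under binding `σ`:
`m'(p) = m(p) − σ(F_in(p,t)) + σ(F_out(t,p))`. -/
def fire [DecidableEq V] (N : CLogNet P T Var V DT Cat) (m : Marking P V) (t : T)
    (σ : Var → V) : Marking P V :=
  fun p => (m p - evalIn σ (N.flowIn p t)) + evalOut σ (N.flowOut t p)

/-- One firing step `m →t m'` (for some transition `t` and enabling binding `σ`). -/
def Fires [DecidableEq V] (N : CLogNet P T Var V DT Cat) (c : Cat)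
    (m m' : Marking P V) : Prop :=
  ∃ t σ, N.Enabled c m t σ ∧ m' = N.fire m t σ

/-- Reachability by a finite sequence of firings. -/
def Reachable [DecidableEq V] (N : CLogNet P T Var V DT Cat) (c : Cat)
    (m0 m : Marking P V) : Prop :=
  Relation.ReflTransGen (N.Fires c) m0 m

/-- A CLog-net is conservative if no ν-variable occurs in any output flow. -/
def Conservative (N : CLogNet P T Var V DT Cat) : Prop :=
  ∀ t p, ∀ ins ∈ N.flowOut t p, ∀ x ∈ N.nu, Sum.inl x ∉ ins

end CLogNet

/-- Conservative CLog-nets create no new data values: for every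
marking `m` reachable from `m0`,
`Val(m) ⊆ Val(m0) ∪ Val(Cat) ∪ C`, where `C` is the set of constants occurring in the
guards and the output flows of the net. -/
theorem conservative_no_new_values {P T Var V DT Cat : Type} [DecidableEq V]
    (N : CLogNet P T Var V DT Cat) (c : Cat) (m0 m : Marking P V)
    (hcons : N.Conservative)
    (hreach : N.Reachable c m0 m) :
    CLogNet.MVal m ⊆
      CLogNet.MVal m0 ∪ N.catVal c ∪ ⋃ t : T, (N.guardConsts t ∪ N.outConsts t) := by
  induction hreach with
  | refl => exact fun v hv => Or.inl (Or.inl hv)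
  | tail _ hstep ih =>
    obtain ⟨t, σ, ⟨_, hin, _, _, hcat⟩, rfl⟩ := hstep
    rintro v ⟨p, tup, htup, hv⟩
    rcases Multiset.mem_add.1 htup with h | h
    · exact ih ⟨p, tup, Multiset.mem_of_le (Multiset.sub_le_self _ _) h, hv⟩
    · obtain ⟨ins, hins, rfl⟩ := Multiset.mem_map.1 h
      obtain ⟨e, he, rfl⟩ := List.mem_map.1 hv
      cases e with
      | inr w =>
        exact Or.inr (Set.mem_iUnion.2 ⟨t, Or.inr ⟨p, ins, hins, he⟩⟩)
      | inl x =>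
        have hnu : x ∉ N.nu := fun hx => hcons t p ins hins x hx he
        by_cases hx : x ∈ N.inVars t
        · obtain ⟨q, ins', hins', hx'⟩ := hx
          exact ih ⟨q, ins'.map σ,
            Multiset.mem_of_le (hin q) (Multiset.mem_map_of_mem _ hins'),
            List.mem_map_of_mem hx'⟩
        · exact Or.inl (Or.inr (hcat x ⟨p, ins, hins, he⟩ hnu hx))
end

section
/- For a conservative CLog-net N with a fixed finite catalog instance Cat and initial marking m0, pointwise multiset inclusion is a well-quasi-order on the reachable markings: for every infinite sequence m_1, m_2, … of markings reachable from m0 there exist indices i < j such that m_i(p) ⊆ m_j(p) for every place p. -/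
variable {P T Var V DT Cat : Type}

namespace CLogNet

theorem finite_mem_lists {α β : Type} (s : Multiset (List α)) (g : α → β → Prop)
    (hg : ∀ a, {b | g a b}.Finite) : {b | ∃ l ∈ s, ∃ a ∈ l, g a b}.Finite := by
  classical
  have : {b | ∃ l ∈ s, ∃ a ∈ l, g a b}
      = ⋃ l ∈ (s.toFinset : Set (List α)), ⋃ a ∈ (l.toFinset : Set α), {b | g a b} := by
    ext b; simp
  rw [this]
  exact (Finset.finite_toSet _).biUnion fun l _ =>
    (Finset.finite_toSet _).biUnion fun a _ => hg a

theorem mval_finite {P V : Type} [Finite P] (m : Marking P V) : (MVal m).Finite := by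
  have : MVal m = ⋃ p, {v | ∃ l ∈ m p, ∃ a ∈ l, a = v} := by
    ext v; simp [MVal]
  rw [this]
  exact Set.finite_iUnion fun p => finite_mem_lists _ _ fun a => by simp

theorem outConsts_finite {P T Var V DT Cat : Type} [Finite P]
    (N : CLogNet P T Var V DT Cat) (t : T) : (N.outConsts t).Finite := by
  have : N.outConsts t = ⋃ p, {v | ∃ l ∈ N.flowOut t p, ∃ a ∈ l, a = Sum.inr v} := by
    ext v; simp [outConsts]
  rw [this]
  refine Set.finite_iUnion fun p => finite_mem_lists _ _ fun a => ?_
  refine Set.Subsingleton.finite ?_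
  intro x hx y hy
  have h : (Sum.inr x : Var ⊕ V) = Sum.inr y := by
    rw [Set.mem_setOf_eq] at hx hy
    rw [← hx, ← hy]
  exact Sum.inr_injective h

/-- The finite set of values that can occur in reachable markings. -/
def vals {P T Var V DT Cat : Type} (N : CLogNet P T Var V DT Cat) (c : Cat)
    (m0 : Marking P V) : Set V :=
  MVal m0 ∪ N.catVal c ∪ ⋃ t, N.outConsts t

theorem reachable_inv {P T Var V DT Cat : Type} [DecidableEq V]
    (N : CLogNet P T Var V DT Cat) (c : Cat) (m0 : Marking P V)
    (hm0 : N.IsMarking m0) (hcons : N.Conservative) (m : Marking P V)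
    (h : N.Reachable c m0 m) :
    ∀ p, ∀ l ∈ m p, l.length = (N.color p).length ∧ ∀ v ∈ l, v ∈ N.vals c m0 := by
  induction h with
  | refl =>
    intro p l hl
    exact ⟨(hm0 p l hl).length_eq, fun v hv => Or.inl (Or.inl ⟨p, l, hl, hv⟩)⟩
  | tail _ hstep ih =>
    obtain ⟨t, σ, ⟨_, hin, _, _, hcat⟩, rfl⟩ := hstep
    intro p l hl
    rcases Multiset.mem_add.1 hl with hl | hl
    · exact ih p l (Multiset.mem_of_le (Multiset.sub_le_self _ _) hl)
    · obtain ⟨ins, hins, rfl⟩ := Multiset.mem_map.1 hl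
      refine ⟨by simpa using (N.flowOutTyped t p ins hins).length_eq, ?_⟩
      intro v hv
      obtain ⟨e, he, rfl⟩ := List.mem_map.1 hv
      rcases e with x | w
      · by_cases hx : x ∈ N.inVars t
        · obtain ⟨q, ins', hins', hx'⟩ := hx
          exact (ih q _ (Multiset.mem_of_le (hin q)
            (Multiset.mem_map_of_mem _ hins'))).2 _ (List.mem_map_of_mem hx')
        · exact Or.inl (Or.inr (hcat x ⟨p, ins, hins, he⟩
            (fun hnu => hcons t p ins hins x hnu he) hx))
      · exact Or.inr (Set.mem_iUnion.2 ⟨t, p, ins, hins, he⟩)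

end CLogNet

/-- For a conservative CLog-net with a fixed (finite) catalog
instance and initial marking `m0`, pointwise multiset inclusion is a well-quasi-order
on the reachable markings: every infinite sequence of reachable markings contains
indices `i < j` with `m_i(p) ⊆ m_j(p)` for every place `p`. -/
theorem conservative_reachable_wqo {P T Var V DT Cat : Type}
    [Finite P] [Finite T] [DecidableEq V]
    (N : CLogNet P T Var V DT Cat) (c : Cat) (m0 : Marking P V)
    (hm0 : N.IsMarking m0)
    (hcons : N.Conservative)
    (f : ℕ → Marking P V) (hf : ∀ i, N.Reachable c m0 (f i)) :
    ∃ i j, i < j ∧ ∀ p, f i p ≤ f j p := by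
  have hV : (N.vals c m0).Finite :=
    ((CLogNet.mval_finite m0).union (N.catValFinite c)).union
      (Set.finite_iUnion fun t => N.outConsts_finite t)
  let K : P → Set (List V) := fun p =>
    {l | l.length = (N.color p).length ∧ ∀ v ∈ l, v ∈ N.vals c m0}
  have hK : ∀ p, (K p).Finite := by
    intro p
    have : Finite (N.vals c m0) := hV
    refine ((List.finite_length_eq (N.vals c m0) (N.color p).length).image
      (List.map Subtype.val)).subset ?_
    rintro l ⟨h1, h2⟩
    exact ⟨l.attachWith _ h2, by simp [h1], by simp⟩
  have : ∀ p, Finite (K p) := hK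
  let g : ℕ → ((Σ p, K p) → ℕ) := fun i x => (f i x.1).count x.2.1
  obtain ⟨i, j, hij, hle⟩ := wellQuasiOrdered_le g
  refine ⟨i, j, hij, fun p => Multiset.le_iff_count.2 fun l => ?_⟩
  by_cases hl : l ∈ f i p
  · exact hle ⟨p, l, N.reachable_inv c m0 hm0 hcons _ (hf i) p l hl⟩
  · simp [Multiset.count_eq_zero_of_notMem hl]
end

section
/- In the order-to-delivery CLog-net, for every catalog instance Cat over the schema {ProdCat(p:ProdType), Comp(c:CId, p:ProdType, t:TruckType)} and for every marking m reachable from an initial marking in which the places working, paid, ready, in-truck, delivered, in-house, and at-dest are empty and pool holds an arbitrary finite multiset of trucks, there is no pair (p,o) such that ⟨p,o⟩ occurs in m(delivered) and ⟨o⟩ occurs in m(working): a delivered item can never belong to a still-working (unpaid) order. -/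
/-- A marking of the order-to-delivery CLog-net: places `working`, `paid` of type
`Order`, `ready`, `delivered` of type `ProdType × Order`, `intruck` of type
`ProdType × Order × Plate`, and `pool`, `inhouse`, `atdest` of type
`Plate × TruckType`. -/
structure OTDMarking (Order ProdType Plate TruckType : Type) where
  working : Multiset Order
  paid : Multiset Order
  ready : Multiset (ProdType × Order)
  intruck : Multiset (ProdType × Order × Plate)
  delivered : Multiset (ProdType × Order)
  pool : Multiset (Plate × TruckType)
  inhouse : Multiset (Plate × TruckType)
  atdest : Multiset (Plate × TruckType)

/-- A (finite) catalog instance over the schema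
`{ProdCat(p : ProdType), Comp(c : CId, p : ProdType, t : TruckType)}`. -/
structure OTDCatalog (CId ProdType TruckType : Type) where
  prodCat : Finset ProdType
  comp : Finset (CId × ProdType × TruckType)

/-- The `Order`-typed values occurring in a marking (the catalog contains no values
of type `Order`, the types being pairwise disjoint). -/
def orderVals {Order ProdType Plate TruckType : Type}
    (m : OTDMarking Order ProdType Plate TruckType) : Set Order :=
  {o | o ∈ m.working ∨ o ∈ m.paid ∨ (∃ p, (p, o) ∈ m.ready) ∨
       (∃ p pl, (p, o, pl) ∈ m.intruck) ∨ (∃ p, (p, o) ∈ m.delivered)}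

/-- The firing steps of the order-to-delivery CLog-net, for a catalog instance
`Cat`. -/
inductive OTDStep {Order ProdType Plate TruckType CId : Type}
    [DecidableEq Order] [DecidableEq ProdType] [DecidableEq Plate]
    [DecidableEq TruckType]
    (Cat : OTDCatalog CId ProdType TruckType) :
    OTDMarking Order ProdType Plate TruckType →
    OTDMarking Order ProdType Plate TruckType → Prop
  /-- (new order): output `⟨ν_o⟩` to `working`, with `ν_o` bound to a value fresh
  w.r.t. the current marking (and the catalog, which contains no orders). -/
  | newOrder (m : OTDMarking Order ProdType Plate TruckType) (o : Order)
      (hfresh : o ∉ orderVals m) :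
      OTDStep Cat m { m with working := m.working + {o} }
  /-- (add item): consume and re-produce `⟨o⟩` on `working`, guard `ProdCat(p)`,
  output `⟨p,o⟩` to `ready`. -/
  | addItem (m : OTDMarking Order ProdType Plate TruckType) (p : ProdType) (o : Order)
      (ho : o ∈ m.working) (hp : p ∈ Cat.prodCat) :
      OTDStep Cat m { m with ready := m.ready + {(p, o)} }
  /-- (rem): consume `⟨p,o⟩` from `ready`. -/
  | rem (m : OTDMarking Order ProdType Plate TruckType) (p : ProdType) (o : Order)
      (h : (p, o) ∈ m.ready) :
      OTDStep Cat m { m with ready := m.ready.erase (p, o) }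
  /-- (pay): consume `⟨o⟩` from `working`, consume and re-produce `⟨p,o⟩` on `ready`,
  produce `⟨o⟩` in `paid`. -/
  | pay (m : OTDMarking Order ProdType Plate TruckType) (p : ProdType) (o : Order)
      (ho : o ∈ m.working) (hr : (p, o) ∈ m.ready) :
      OTDStep Cat m { m with working := m.working.erase o, paid := m.paid + {o} }
  /-- (use): move `⟨pl,t⟩` from `pool` to `inhouse`. -/
  | use (m : OTDMarking Order ProdType Plate TruckType) (pl : Plate) (t : TruckType)
      (h : (pl, t) ∈ m.pool) :
      OTDStep Cat m
        { m with pool := m.pool.erase (pl, t), inhouse := m.inhouse + {(pl, t)} }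
  /-- (load): consume `⟨p,o⟩` from `ready`, consume and re-produce `⟨pl,t⟩` on
  `inhouse` and `⟨o⟩` on `paid`, guard `∃c. Comp(c,p,t)`, produce `⟨p,o,pl⟩` in
  `intruck`. -/
  | load (m : OTDMarking Order ProdType Plate TruckType) (p : ProdType) (o : Order)
      (pl : Plate) (t : TruckType)
      (hr : (p, o) ∈ m.ready) (hh : (pl, t) ∈ m.inhouse) (hpaid : o ∈ m.paid)
      (hguard : ∃ c : CId, (c, p, t) ∈ Cat.comp) :
      OTDStep Cat m
        { m with ready := m.ready.erase (p, o), intruck := m.intruck + {(p, o, pl)} }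
  /-- (drop): consume `⟨p,o,pl⟩` from `intruck`, consume and re-produce `⟨pl,t⟩` on
  `inhouse`, produce `⟨p,o⟩` in `ready`. -/
  | drop (m : OTDMarking Order ProdType Plate TruckType) (p : ProdType) (o : Order)
      (pl : Plate) (t : TruckType)
      (hi : (p, o, pl) ∈ m.intruck) (hh : (pl, t) ∈ m.inhouse) :
      OTDStep Cat m
        { m with intruck := m.intruck.erase (p, o, pl), ready := m.ready + {(p, o)} }
  /-- (drive): move `⟨pl,t⟩` from `inhouse` to `atdest` while consuming and
  re-producing some `⟨p,o,pl⟩` on `intruck`. -/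
  | drive (m : OTDMarking Order ProdType Plate TruckType) (pl : Plate) (t : TruckType)
      (p : ProdType) (o : Order)
      (hh : (pl, t) ∈ m.inhouse) (hi : (p, o, pl) ∈ m.intruck) :
      OTDStep Cat m
        { m with inhouse := m.inhouse.erase (pl, t), atdest := m.atdest + {(pl, t)} }
  /-- (move): consume and re-produce `⟨pl,t⟩` on `atdest`. -/
  | move (m : OTDMarking Order ProdType Plate TruckType) (pl : Plate) (t : TruckType)
      (h : (pl, t) ∈ m.atdest) :
      OTDStep Cat m m
  /-- (go back): move `⟨pl,t⟩` from `atdest` to `inhouse`. -/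
  | goBack (m : OTDMarking Order ProdType Plate TruckType) (pl : Plate) (t : TruckType)
      (h : (pl, t) ∈ m.atdest) :
      OTDStep Cat m
        { m with atdest := m.atdest.erase (pl, t), inhouse := m.inhouse + {(pl, t)} }
  /-- (deliver): consume `⟨p,o,pl⟩` from `intruck`, consume and re-produce `⟨pl,t⟩`
  on `atdest`, produce `⟨p,o⟩` in `delivered`. -/
  | deliver (m : OTDMarking Order ProdType Plate TruckType) (p : ProdType) (o : Order)
      (pl : Plate) (t : TruckType)
      (hi : (p, o, pl) ∈ m.intruck) (ha : (pl, t) ∈ m.atdest) :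
      OTDStep Cat m
        { m with intruck := m.intruck.erase (p, o, pl),
                 delivered := m.delivered + {(p, o)} }

/-- The initial marking: all places empty except `pool`, which holds an arbitrary
finite multiset of trucks. -/
def OTDInit {Order ProdType Plate TruckType : Type}
    (pool0 : Multiset (Plate × TruckType)) :
    OTDMarking Order ProdType Plate TruckType :=
  { working := 0, paid := 0, ready := 0, intruck := 0, delivered := 0,
    pool := pool0, inhouse := 0, atdest := 0 }

/-- The inductive invariant: `working` has no repetitions, no working order is paid, and
every order in a truck or delivered is paid. -/
def OTDInv {Order ProdType Plate TruckType : Type}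
    (m : OTDMarking Order ProdType Plate TruckType) : Prop :=
  m.working.Nodup ∧ (∀ o ∈ m.working, o ∉ m.paid) ∧
  (∀ p o pl, (p, o, pl) ∈ m.intruck → o ∈ m.paid) ∧
  (∀ p o, (p, o) ∈ m.delivered → o ∈ m.paid)

theorem OTDInv.step {Order ProdType Plate TruckType CId : Type}
    [DecidableEq Order] [DecidableEq ProdType] [DecidableEq Plate]
    [DecidableEq TruckType]
    {Cat : OTDCatalog CId ProdType TruckType}
    {m m' : OTDMarking Order ProdType Plate TruckType}
    (hs : OTDStep Cat m m') (h : OTDInv m) : OTDInv m' := by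
  obtain ⟨h1, h2, h3, h4⟩ := h
  cases hs with
  | newOrder o hf =>
    simp only [orderVals, Set.mem_setOf_eq, not_or] at hf
    refine ⟨?_, ?_, h3, h4⟩
    · rw [add_comm, Multiset.singleton_add]
      exact Multiset.nodup_cons.2 ⟨hf.1, h1⟩
    · intro a ha
      rcases Multiset.mem_add.1 ha with ha | ha
      · exact h2 a ha
      · rw [Multiset.mem_singleton.1 ha]
        exact hf.2.1
  | pay p o ho hr =>
    refine ⟨h1.erase o, ?_, ?_, ?_⟩
    · intro a ha hp
      obtain ⟨hne, ha⟩ := h1.mem_erase_iff.1 ha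
      rcases Multiset.mem_add.1 hp with hp | hp
      · exact h2 a ha hp
      · exact hne (Multiset.mem_singleton.1 hp)
    · exact fun p o pl h => Multiset.mem_add.2 (Or.inl (h3 p o pl h))
    · exact fun p o h => Multiset.mem_add.2 (Or.inl (h4 p o h))
  | load p o pl t hr hh hpaid hguard =>
    refine ⟨h1, h2, ?_, h4⟩
    intro p' o' pl' h
    rcases Multiset.mem_add.1 h with h | h
    · exact h3 _ _ _ h
    · obtain ⟨-, rfl, -⟩ := by simpa using h
      exact hpaid
  | drop p o pl t hi hh =>
    exact ⟨h1, h2, fun p o pl h => h3 p o pl (Multiset.mem_of_mem_erase h), h4⟩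
  | deliver p o pl t hi ha =>
    refine ⟨h1, h2, fun p o pl h => h3 p o pl (Multiset.mem_of_mem_erase h), ?_⟩
    intro p' o' h
    rcases Multiset.mem_add.1 h with h | h
    · exact h4 _ _ h
    · obtain ⟨-, rfl⟩ := by simpa using h
      exact h3 _ _ _ hi
  | _ => exact ⟨h1, h2, h3, h4⟩

/-- In the order-to-delivery CLog-net, for every catalog instance
and every marking reachable from the initial marking, no pair `(p,o)` is such that
`⟨p,o⟩` occurs in `delivered` while `⟨o⟩` occurs in `working`: a delivered item can
never belong to a still-working (unpaid) order. -/
theorem otd_no_delivered_working {Order ProdType Plate TruckType CId : Type}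
    [DecidableEq Order] [DecidableEq ProdType] [DecidableEq Plate]
    [DecidableEq TruckType]
    [Countable Order] [Infinite Order] [Countable Plate] [Infinite Plate]
    (Cat : OTDCatalog CId ProdType TruckType)
    (pool0 : Multiset (Plate × TruckType))
    (m : OTDMarking Order ProdType Plate TruckType)
    (hreach : Relation.ReflTransGen (OTDStep Cat) (OTDInit pool0) m) :
    ¬ ∃ (p : ProdType) (o : Order), (p, o) ∈ m.delivered ∧ o ∈ m.working := by
  have hinv : OTDInv m := by
    induction hreach with
    | refl => simp [OTDInv, OTDInit]
    | tail _ hs ih => exact OTDInv.step hs ih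
  rintro ⟨p, o, hd, hw⟩
  exact hinv.2.1 o hw (hinv.2.2.2 p o hd)
end

section
/- In the order-to-delivery CLog-net, the following invariant holds in every marking m reachable (for any catalog instance Cat) from an initial marking in which the places working, paid, ready, in-truck, delivered, in-house, and at-dest are empty and pool holds an arbitrary finite multiset of trucks: (1) every order identifier o occurs in m(working) + m(paid) with total multiplicity at most 1, and (2) whenever ⟨p,o,m'⟩ occurs in m(in-truck) or ⟨p,o⟩ occurs in m(delivered), the token ⟨o⟩ occurs in m(paid). -/
/-- In the order-to-delivery CLog-net, every reachable marking `m`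
(for any catalog instance) satisfies the invariant: (1) every order identifier `o`
occurs in `m(working) + m(paid)` with total multiplicity at most 1, and (2) whenever
`⟨p,o,pl⟩` occurs in `m(in-truck)` or `⟨p,o⟩` occurs in `m(delivered)`, the token
`⟨o⟩` occurs in `m(paid)`. -/
theorem otd_invariant {Order ProdType Plate TruckType CId : Type}
    [DecidableEq Order] [DecidableEq ProdType] [DecidableEq Plate]
    [DecidableEq TruckType]
    [Countable Order] [Infinite Order] [Countable Plate] [Infinite Plate]
    (Cat : OTDCatalog CId ProdType TruckType)
    (pool0 : Multiset (Plate × TruckType))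
    (m : OTDMarking Order ProdType Plate TruckType)
    (hreach : Relation.ReflTransGen (OTDStep Cat) (OTDInit pool0) m) :
    (∀ o : Order, m.working.count o + m.paid.count o ≤ 1) ∧
    (∀ (p : ProdType) (o : Order) (pl : Plate), (p, o, pl) ∈ m.intruck → o ∈ m.paid) ∧
    (∀ (p : ProdType) (o : Order), (p, o) ∈ m.delivered → o ∈ m.paid) := by
  induction hreach with
  | refl => simp [OTDInit]
  | tail _ hstep ih =>
    obtain ⟨h1, h2, h3⟩ := ih
    cases hstep with
    | newOrder o hfresh =>
      refine ⟨fun o' => ?_, h2, h3⟩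
      simp only [orderVals, Set.mem_setOf_eq, not_or] at hfresh
      have hw := Multiset.count_eq_zero.mpr hfresh.1
      have hp := Multiset.count_eq_zero.mpr hfresh.2.1
      have := h1 o'
      simp only [Multiset.count_add, Multiset.count_singleton]
      split_ifs with h
      · subst h; omega
      · omega
    | addItem p o ho hp => exact ⟨h1, h2, h3⟩
    | rem p o h => exact ⟨h1, h2, h3⟩
    | pay p o ho hr =>
      refine ⟨fun o' => ?_, fun p o pl h => Multiset.mem_add.mpr (Or.inl (h2 p o pl h)),
        fun p o h => Multiset.mem_add.mpr (Or.inl (h3 p o h))⟩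
      have := h1 o'
      have hc := Multiset.one_le_count_iff_mem.mpr ho
      simp only [Multiset.count_add, Multiset.count_singleton]
      by_cases h : o' = o
      · subst h
        rw [Multiset.count_erase_self, if_pos rfl]
        omega
      · rw [Multiset.count_erase_of_ne h, if_neg h]
        omega
    | use pl t h => exact ⟨h1, h2, h3⟩
    | load p o pl t hr hh hpaid hguard =>
      refine ⟨h1, fun p' o' pl' h => ?_, h3⟩
      rcases Multiset.mem_add.mp h with h | h
      · exact h2 _ _ _ h
      · simp only [Multiset.mem_singleton, Prod.mk.injEq] at h
        obtain ⟨-, rfl, -⟩ := h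
        exact hpaid
    | drop p o pl t hi hh =>
      exact ⟨h1, fun p' o' pl' h => h2 _ _ _ (Multiset.mem_of_mem_erase h), h3⟩
    | drive pl t p o hh hi => exact ⟨h1, h2, h3⟩
    | move pl t h => exact ⟨h1, h2, h3⟩
    | goBack pl t h => exact ⟨h1, h2, h3⟩
    | deliver p o pl t hi ha =>
      refine ⟨h1, fun p' o' pl' h => h2 _ _ _ (Multiset.mem_of_mem_erase h),
        fun p' o' h => ?_⟩
      rcases Multiset.mem_add.mp h with h | h
      · exact h3 _ _ h
      · simp only [Multiset.mem_singleton, Prod.mk.injEq] at h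
        obtain ⟨-, rfl⟩ := h
        exact h2 _ _ _ hi
end
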